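/- The Weyl group W acts transitively on C: for any two elements c1, c2 ∈ C there exists w ∈ W which maps c1 to c2 (applying w to every root in every pair of c1). -/

import Mathlib

noncomputable section

/-- The standard dot product on ℝ^8. -/
def dot (a b : Fin 8 → ℝ) : ℝ := ∑ i, a i * b i

/-- Membership in the E8 lattice Λ: all coordinates are integers or all lie in ℤ + 1/2,
and the coordinates sum to an even integer. -/
def inLambda (a : Fin 8 → ℝ) : Prop :=
  ((∀ i, ∃ n : ℤ, a i = n) ∨ (∀ i, ∃ n : ℤ, a i = n + 1 / 2)) ∧
    ∃ n : ℤ, (∑ i, a i) = 2 * n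

/-- The E8 root system E: lattice vectors of squared norm 2. -/
def isRoot (a : Fin 8 → ℝ) : Prop := inLambda a ∧ dot a a = 2

/-- The Weyl group W: linear isometries of ℝ^8 mapping the root system E onto itself. -/
def IsWeyl (w : (Fin 8 → ℝ) ≃ₗ[ℝ] (Fin 8 → ℝ)) : Prop :=
  (∀ a b : Fin 8 → ℝ, dot (w a) (w b) = dot a b) ∧
    (⇑w '' {a | isRoot a} = {a | isRoot a})

/-- An element of the set `C`: a family of seven unordered pairs of roots
`{{e₁,f₁},…,{e₇,f₇}}` with `eᵢ·fᵢ = 0` for each `i`, and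
`eᵢ·eⱼ = eᵢ·fⱼ = fᵢ·fⱼ = 1` for all `i ≠ j` (the vertex set of a 7-crosspolytope
facet of the E8 root polytope). -/
def IsCross (P : Set (Set (Fin 8 → ℝ))) : Prop :=
  ∃ e f : Fin 7 → (Fin 8 → ℝ),
    P = Set.range (fun i => ({e i, f i} : Set (Fin 8 → ℝ))) ∧
    (∀ i, isRoot (e i) ∧ isRoot (f i)) ∧
    (∀ i, dot (e i) (f i) = 0) ∧
    (∀ i j, i ≠ j →
      dot (e i) (e j) = 1 ∧ dot (e i) (f j) = 1 ∧ dot (f i) (f j) = 1)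

theorem dot_eq (a b : Fin 8 → ℝ) : dot a b = a ⬝ᵥ b := rfl

theorem exists_int_parity (n : Fin 8 → ℤ) : ∃ k : ℤ, ∑ i, n i * n i = ∑ i, n i + 2 * k := by
  have h : ∀ i, ∃ k : ℤ, n i * n i = n i + 2 * k := by
    intro i
    obtain ⟨k, hk⟩ := Int.even_mul_pred_self (n i)
    exact ⟨k, by linarith⟩
  choose k hk using h
  refine ⟨∑ i, k i, ?_⟩
  rw [Finset.mul_sum, ← Finset.sum_add_distrib]
  exact Finset.sum_congr rfl fun i _ => hk i

theorem sum_half (n : Fin 8 → ℤ) : ∑ i, ((n i : ℝ) + 1 / 2) = ((∑ i, n i : ℤ) : ℝ) + 4 := by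
  push_cast
  simp only [Fin.sum_univ_eight]; ring

theorem dot_half (n m : Fin 8 → ℤ) : ∑ i, ((n i : ℝ) + 1 / 2) * ((m i : ℝ) + 1 / 2) =
    ((∑ i, n i * m i : ℤ) : ℝ) + ((∑ i, n i : ℤ) + (∑ i, m i : ℤ) : ℝ) / 2 + 2 := by
  push_cast
  simp only [Fin.sum_univ_eight]; ring

theorem dot_int_half (n m : Fin 8 → ℤ) : ∑ i, (n i : ℝ) * ((m i : ℝ) + 1 / 2) =
    ((∑ i, n i * m i : ℤ) : ℝ) + ((∑ i, n i : ℤ) : ℝ) / 2 := by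
  push_cast
  simp only [Fin.sum_univ_eight]; ring

theorem dot_comm' (a b : Fin 8 → ℝ) : dot a b = dot b a := by
  simp only [dot_eq, dotProduct_comm]

theorem lam_dot_int {a b : Fin 8 → ℝ} (ha : inLambda a) (hb : inLambda b) :
    ∃ k : ℤ, dot a b = k := by
  have key : ∀ {a b : Fin 8 → ℝ}, inLambda a → inLambda b → (∀ i, ∃ n : ℤ, a i = n) →
      ∃ k : ℤ, dot a b = k := by
    intro a b ha hb h
    choose n hn using h
    obtain ⟨_, s, hs⟩ := ha
    obtain ⟨h | h, _⟩ := hb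
    · choose m hm using h
      exact ⟨∑ i, n i * m i, by simp [dot, hn, hm]⟩
    · choose m hm using h
      refine ⟨∑ i, n i * m i + s, ?_⟩
      have : dot a b = _ := (by simp only [dot, hn, hm] : dot a b = _).trans (dot_int_half n m)
      rw [this]
      simp only [hn] at hs
      push_cast at hs ⊢
      linarith
  rcases ha.1 with h | h
  · exact key ha hb h
  rcases hb.1 with h' | h'
  · rw [dot_comm']; exact key hb ha h'
  choose n hn using h
  choose m hm using h'
  obtain ⟨_, s, hs⟩ := ha
  obtain ⟨_, t, ht⟩ := hb
  simp only [hn, sum_half] at hs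
  simp only [hm, sum_half] at ht
  refine ⟨∑ i, n i * m i + s + t - 2, ?_⟩
  have : dot a b = _ := (by simp only [dot, hn, hm] : dot a b = _).trans (dot_half n m)
  rw [this]
  push_cast at hs ht ⊢
  linarith

theorem lam_norm_even {a : Fin 8 → ℝ} (ha : inLambda a) : ∃ k : ℤ, dot a a = 2 * k := by
  obtain ⟨h | h, s, hs⟩ := ha
  · choose n hn using h
    obtain ⟨k, hk⟩ := exists_int_parity n
    refine ⟨s + k, ?_⟩
    have h1 : dot a a = ((∑ i, n i * n i : ℤ) : ℝ) := by simp [dot, hn]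
    have h2 : ((∑ i, n i : ℤ) : ℝ) = 2 * s := by rw [← hs]; simp [hn]
    rw [h1, hk]
    push_cast at h2 ⊢
    linarith
  · choose n hn using h
    obtain ⟨k, hk⟩ := exists_int_parity n
    have h1 : dot a a = _ := (by simp only [dot, hn] : dot a a = _).trans (dot_half n n)
    simp only [hn, sum_half] at hs
    refine ⟨2 * s - 4 + k + 1, ?_⟩
    rw [h1, hk]
    push_cast at hs ⊢
    linarith

/-- Self-duality: integer or half coordinates test. -/
theorem type_of_pm (x : Fin 8 → ℝ)
    (h1 : ∀ i : Fin 7, ∃ k : ℤ, x 0 + x i.succ = k) (h2 : ∀ i : Fin 7, ∃ k : ℤ, x 0 - x i.succ = k) :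
    (∀ i, ∃ n : ℤ, x i = n) ∨ (∀ i, ∃ n : ℤ, x i = n + 1 / 2) := by
  choose p hp using h1
  choose q hq using h2
  rcases Int.even_or_odd' (p 0 + q 0) with ⟨c, hc | hc⟩
  · have h0 : x 0 = c := by
      have : ((p 0 + q 0 : ℤ) : ℝ) = ((2 * c : ℤ) : ℝ) := by rw [hc]
      push_cast at this
      linarith [hp 0, hq 0]
    left
    intro i
    refine Fin.cases ⟨c, h0⟩ (fun i => ⟨p i - c, ?_⟩) i
    push_cast; linarith [hp i]
  · have h0 : x 0 = c + 1 / 2 := by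
      have : ((p 0 + q 0 : ℤ) : ℝ) = ((2 * c + 1 : ℤ) : ℝ) := by rw [hc]
      push_cast at this
      linarith [hp 0, hq 0]
    right
    intro i
    refine Fin.cases ⟨c, h0⟩ (fun i => ⟨p i - c - 1, ?_⟩) i
    push_cast; linarith [hp i]

/-- Orthonormal frame attached to a crosspolytope. -/
def IsFrame (g : Fin 8 → Fin 8 → ℝ) : Prop :=
  (∀ i j, dot (g i) (g j) = if i = j then 1 else 0) ∧
  (∀ i : Fin 7, isRoot (g 0 + g i.succ) ∧ isRoot (g 0 - g i.succ))

def crossOf (g : Fin 8 → Fin 8 → ℝ) : Set (Set (Fin 8 → ℝ)) :=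
  Set.range (fun i : Fin 7 => ({g 0 + g i.succ, g 0 - g i.succ} : Set (Fin 8 → ℝ)))

theorem dot_add_right (a b c : Fin 8 → ℝ) : dot a (b + c) = dot a b + dot a c := by
  simp only [dot_eq, dotProduct_add]
theorem dot_sub_right (a b c : Fin 8 → ℝ) : dot a (b - c) = dot a b - dot a c := by
  simp only [dot_eq, dotProduct_sub]
theorem dot_add_left (a b c : Fin 8 → ℝ) : dot (a + b) c = dot a c + dot b c := by
  simp only [dot_eq, add_dotProduct]
theorem dot_sub_left (a b c : Fin 8 → ℝ) : dot (a - b) c = dot a c - dot b c := by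
  simp only [dot_eq, sub_dotProduct]
theorem dot_smul_left (r : ℝ) (a c : Fin 8 → ℝ) : dot (r • a) c = r * dot a c := by
  simp only [dot_eq, smul_dotProduct, smul_eq_mul]
theorem dot_smul_right (r : ℝ) (a c : Fin 8 → ℝ) : dot a (r • c) = r * dot a c := by
  simp only [dot_eq, dotProduct_smul, smul_eq_mul]

theorem dot_self_zero {a : Fin 8 → ℝ} (h : dot a a = 0) : a = 0 :=
  dotProduct_self_eq_zero.1 h

theorem exists_frame (P) (h : IsCross P) : ∃ g, IsFrame g ∧ P = crossOf g := by
  obtain ⟨e, f, rfl, hr, h0, h1⟩ := h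
  have hv : ∀ i, e i + f i = e 0 + f 0 := by
    intro i
    by_cases hi : i = 0
    · rw [hi]
    obtain ⟨a1, a2, a3⟩ := h1 i 0 hi
    obtain ⟨b1, b2, b3⟩ := h1 0 i (Ne.symm hi)
    have c1 := (hr i).1.2
    have c2 := (hr i).2.2
    have c3 := (hr 0).1.2
    have c4 := (hr 0).2.2
    have d1 := h0 i
    have d2 := h0 0
    have d3 := h0 i
    have d4 := h0 0
    rw [dot_comm'] at d3 d4
    have e1 := a2
    have e2 := b2
    rw [dot_comm'] at e1 e2
    have : dot ((e i + f i) - (e 0 + f 0)) ((e i + f i) - (e 0 + f 0)) = 0 := by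
      simp only [dot_add_left, dot_add_right, dot_sub_left, dot_sub_right]
      linarith
    exact sub_eq_zero.1 (dot_self_zero this)
  let g : Fin 8 → Fin 8 → ℝ :=
    Fin.cons ((1 / 2 : ℝ) • (e 0 + f 0)) (fun i => (1 / 2 : ℝ) • (e i - f i))
  have g0 : g 0 = (1 / 2 : ℝ) • (e 0 + f 0) := rfl
  have gs : ∀ i : Fin 7, g i.succ = (1 / 2 : ℝ) • (e i - f i) := fun i => rfl
  have hp : ∀ i : Fin 7, g 0 + g i.succ = e i := by
    intro i; rw [g0, gs, ← hv i]; ext k; simp; ring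
  have hm : ∀ i : Fin 7, g 0 - g i.succ = f i := by
    intro i; rw [g0, gs, ← hv i]; ext k; simp; ring
  have h0s : ∀ i : Fin 7, dot (g 0) (g i.succ) = 0 := by
    intro i
    rw [g0, gs, ← hv i]
    have d := h0 i
    rw [dot_comm'] at d
    simp only [dot_smul_left, dot_smul_right, dot_add_left, dot_sub_right]
    linarith [h0 i, (hr i).1.2, (hr i).2.2]
  refine ⟨g, ⟨?_, ?_⟩, ?_⟩
  · intro i j
    refine Fin.cases ?_ (fun i => ?_) i <;> refine Fin.cases ?_ (fun j => ?_) j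
    · have d := h0 0
      rw [dot_comm'] at d
      simp only [g0, dot_smul_left, dot_smul_right, dot_add_left, dot_add_right, if_true]
      linarith [h0 0, (hr 0).1.2, (hr 0).2.2]
    · rw [h0s, if_neg (Fin.succ_ne_zero j).symm]
    · rw [dot_comm', h0s, if_neg (Fin.succ_ne_zero i)]
    · simp only [gs, Fin.succ_inj, dot_smul_left, dot_smul_right, dot_sub_left, dot_sub_right]
      by_cases hij : i = j
      · subst hij
        have d := h0 i
        rw [dot_comm'] at d
        rw [if_pos rfl]
        linarith [h0 i, (hr i).1.2, (hr i).2.2]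
      · rw [if_neg hij]
        obtain ⟨a1, a2, a3⟩ := h1 i j hij
        obtain ⟨b1, b2, b3⟩ := h1 j i (Ne.symm hij)
        rw [dot_comm'] at b2
        linarith
  · intro i
    rw [hp, hm]; exact hr i
  · simp only [crossOf, hp, hm]

theorem frame_coords_type {g} (hg : IsFrame g) {x} (hx : inLambda x) :
    (∀ i, ∃ n : ℤ, dot (g i) x = n) ∨ (∀ i, ∃ n : ℤ, dot (g i) x = n + 1 / 2) := by
  apply type_of_pm (fun i => dot (g i) x)
  · intro i
    simp only [← dot_add_left]
    exact lam_dot_int (hg.2 i).1.1 hx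
  · intro i
    simp only [← dot_sub_left]
    exact lam_dot_int (hg.2 i).2.1 hx

/-- The coordinate map of a frame. -/
theorem frame_equiv {g} (hg : IsFrame g) : ∃ T : (Fin 8 → ℝ) ≃ₗ[ℝ] (Fin 8 → ℝ),
    (∀ x i, T x i = dot (g i) x) ∧ (∀ x y, dot (T x) (T y) = dot x y) := by
  let M : Matrix (Fin 8) (Fin 8) ℝ := Matrix.of g
  have h1 : M * M.transpose = 1 := by
    ext i j
    rw [Matrix.one_apply]
    exact hg.1 i j
  have h2 : M.transpose * M = 1 := mul_eq_one_comm.1 h1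
  have key : ∀ x y, dot (M.mulVec x) (M.mulVec y) = dot x y := by
    intro x y
    rw [dot_eq, Matrix.dotProduct_mulVec, ← Matrix.mulVec_transpose, Matrix.mulVec_mulVec, h2,
      Matrix.one_mulVec, dot_eq]
  refine ⟨Matrix.toLin'OfInv h2 h1, fun x i => rfl, fun x y => key x y⟩

def Good (g : Fin 8 → Fin 8 → ℝ) : Prop := ∀ x, inLambda x → inLambda (fun i => dot (g i) x)

def flip7 (g : Fin 8 → Fin 8 → ℝ) : Fin 8 → Fin 8 → ℝ := fun i => if i = 7 then - g i else g i

theorem dot_neg_left (a c : Fin 8 → ℝ) : dot (-a) c = - dot a c := by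
  simp only [dot_eq, neg_dotProduct]
theorem dot_neg_right (a c : Fin 8 → ℝ) : dot a (-c) = - dot a c := by
  simp only [dot_eq, dotProduct_neg]

theorem flip_cases (g : Fin 8 → Fin 8 → ℝ) (i : Fin 7) :
    flip7 g i.succ = g i.succ ∨ flip7 g i.succ = - g i.succ := by
  unfold flip7
  split_ifs <;> simp

theorem flip_zero (g : Fin 8 → Fin 8 → ℝ) : flip7 g 0 = g 0 := by
  unfold flip7
  rw [if_neg (by decide)]

theorem flip_frame {g} (hg : IsFrame g) : IsFrame (flip7 g) := by
  refine ⟨?_, ?_⟩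
  · intro i j
    unfold flip7
    have := hg.1 i j
    split_ifs <;> simp_all [dot_neg_left, dot_neg_right]
  · intro i
    rw [flip_zero]
    rcases flip_cases g i with h | h <;> rw [h]
    · exact hg.2 i
    · rw [sub_neg_eq_add, ← sub_eq_add_neg]; exact (hg.2 i).symm

theorem flip_cross (g) : crossOf (flip7 g) = crossOf g := by
  unfold crossOf
  congr 1
  funext i
  rw [flip_zero]
  rcases flip_cases g i with h | h <;> rw [h]
  rw [sub_neg_eq_add, ← sub_eq_add_neg, Set.pair_comm]

theorem good_int {g} (hg : IsFrame g) {x} (hx : inLambda x)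
    (h : ∀ i, ∃ n : ℤ, dot (g i) x = n) : inLambda (fun i => dot (g i) x) := by
  refine ⟨Or.inl h, ?_⟩
  choose n hn using h
  obtain ⟨T, hT, hiso⟩ := frame_equiv hg
  obtain ⟨k, hk⟩ := lam_norm_even hx
  obtain ⟨l, hl⟩ := exists_int_parity n
  refine ⟨k - l, ?_⟩
  have h1 : dot x x = ((∑ i, n i * n i : ℤ) : ℝ) := by
    rw [← hiso]; simp only [dot] at hn; simp [dot, hT, hn]
  rw [hk, hl] at h1
  simp only [hn]
  push_cast at h1 ⊢
  linarith

theorem good_or (g) (hg : IsFrame g) : Good g ∨ Good (flip7 g) := by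
  by_cases H : Good g
  · exact Or.inl H
  right
  unfold Good at H
  push Not at H
  obtain ⟨x, hx, hbad⟩ := H
  have hxh : ∀ i, ∃ n : ℤ, dot (g i) x = n + 1 / 2 := by
    rcases frame_coords_type hg hx with h | h
    · exact absurd (good_int hg hx h) hbad
    · exact h
  have hxh' := hxh
  choose n hn using hxh
  have hodd : Odd (∑ i, n i) := by
    rw [← Int.not_even_iff_odd]
    rintro ⟨k, hk⟩
    apply hbad
    refine ⟨Or.inr hxh', k + 2, ?_⟩
    simp only [hn, sum_half, hk]
    push_cast; ring
  intro y hy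
  rcases frame_coords_type (flip_frame hg) hy with h | h
  · exact good_int (flip_frame hg) hy h
  refine ⟨Or.inr h, ?_⟩
  have hyh : ∀ i, ∃ n : ℤ, dot (g i) y = n + 1 / 2 := by
    rcases frame_coords_type hg hy with h' | h'
    · exfalso
      obtain ⟨a, ha⟩ := h 0
      obtain ⟨b, hb⟩ := h' 0
      rw [flip_zero, hb] at ha
      have : ((2 * b : ℤ) : ℝ) = ((2 * a + 1 : ℤ) : ℝ) := by push_cast; linarith
      have := Int.cast_injective this
      omega
    · exact h'
  choose m hm using hyh
  obtain ⟨T, hT, hiso⟩ := frame_equiv hg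
  obtain ⟨k, hk⟩ := lam_dot_int hx hy
  obtain ⟨a, ha⟩ := hodd
  have h2 : dot (T x) (T y) = ∑ i, ((n i : ℝ) + 1 / 2) * ((m i : ℝ) + 1 / 2) := by
    rw [dot]
    exact Finset.sum_congr rfl fun i _ => by rw [hT, hT, hn, hm]
  rw [hiso, hk, dot_half] at h2
  have h3 : ((∑ i, m i : ℤ) : ℝ) = 2 * (k - (∑ i, n i * m i : ℤ) - 2) - (2 * a + 1) := by
    have : ((∑ i, n i : ℤ) : ℝ) = ((2 * a + 1 : ℤ) : ℝ) := by rw [ha]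
    push_cast at this h2 ⊢
    linarith
  have h4 : ∑ i, dot (flip7 g i) y = ∑ i, dot (g i) y - 2 * dot (g 7) y := by
    simp only [Fin.sum_univ_eight]
    simp [flip7, dot_neg_left]
    ring
  refine ⟨k - (∑ i, n i * m i) - 2 - a - m 7 + 1, ?_⟩
  rw [h4]
  simp only [hm, sum_half]
  rw [h3]
  push_cast
  ring

def stdCross : Set (Set (Fin 8 → ℝ)) := crossOf (fun i => Pi.single i 1)

/-- The lattice contains anything integral against it. -/
theorem self_dual {y : Fin 8 → ℝ} (h : ∀ a, inLambda a → ∃ k : ℤ, dot y a = k) : inLambda y := by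
  have hp : ∀ i : Fin 7, inLambda (Pi.single 0 1 + Pi.single i.succ 1 : Fin 8 → ℝ) := by
    intro i
    refine ⟨Or.inl fun j => ⟨(Pi.single 0 1 + Pi.single i.succ 1 : Fin 8 → ℤ) j, ?_⟩, 1, ?_⟩
    · simp [Pi.single_apply]
    · simp [Finset.sum_add_distrib]; norm_num
  have hm : ∀ i : Fin 7, inLambda (Pi.single 0 1 - Pi.single i.succ 1 : Fin 8 → ℝ) := by
    intro i
    refine ⟨Or.inl fun j => ⟨(Pi.single 0 1 - Pi.single i.succ 1 : Fin 8 → ℤ) j, ?_⟩, 0, ?_⟩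
    · simp [Pi.single_apply]
    · simp [Finset.sum_sub_distrib]
  have hh : inLambda (fun _ => 1 / 2) := by
    refine ⟨Or.inr fun j => ⟨0, by simp⟩, 2, ?_⟩
    simp; norm_num
  refine ⟨type_of_pm y ?_ ?_, ?_⟩
  · intro i
    have := h _ (hp i)
    simpa [dot_eq, dotProduct_add] using this
  · intro i
    have := h _ (hm i)
    simpa [dot_eq, dotProduct_sub] using this
  · obtain ⟨k, hk⟩ := h _ hh
    refine ⟨k, ?_⟩
    rw [← hk, dot, ← Finset.sum_mul]
    ring

theorem to_std (P) (h : IsCross P) : ∃ w : (Fin 8 → ℝ) ≃ₗ[ℝ] (Fin 8 → ℝ),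
    IsWeyl w ∧ (fun s => ⇑w '' s) '' P = stdCross := by
  obtain ⟨g, hg, hgood, rfl⟩ : ∃ g, IsFrame g ∧ Good g ∧ P = crossOf g := by
    obtain ⟨g, hg, rfl⟩ := exists_frame P h
    rcases good_or g hg with h | h
    · exact ⟨g, hg, h, rfl⟩
    · exact ⟨_, flip_frame hg, h, (flip_cross g).symm⟩
  obtain ⟨T, hT, hiso⟩ := frame_equiv hg
  have hlam : ∀ x, inLambda x → inLambda (T x) := by
    intro x hx
    have : T x = fun i => dot (g i) x := funext (hT x)
    rw [this]
    exact hgood x hx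
  refine ⟨T, ⟨hiso, ?_⟩, ?_⟩
  · ext x
    constructor
    · rintro ⟨y, hy, rfl⟩
      exact ⟨hlam y hy.1, (hiso y y).trans hy.2⟩
    · intro hx
      refine ⟨T.symm x, ⟨self_dual ?_, ?_⟩, T.apply_symm_apply x⟩
      · intro a ha
        rw [← hiso, T.apply_symm_apply]
        exact lam_dot_int hx.1 (hlam a ha)
      · rw [← hiso, T.apply_symm_apply]
        exact hx.2
  · have hTg : ∀ j, T (g j) = Pi.single j 1 := by
      intro j
      funext i
      rw [hT, hg.1, Pi.single_apply]
    rw [stdCross, crossOf, crossOf, ← Set.range_comp]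
    congr 1
    funext i
    simp [Set.image_pair, hTg]

theorem stmt_8 (c1 c2 : Set (Set (Fin 8 → ℝ))) (h1 : IsCross c1) (h2 : IsCross c2) :
    ∃ w : (Fin 8 → ℝ) ≃ₗ[ℝ] (Fin 8 → ℝ),
      IsWeyl w ∧ (fun s => ⇑w '' s) '' c1 = c2 := by
  obtain ⟨u, ⟨hu1, hu2⟩, hu⟩ := to_std c1 h1
  obtain ⟨v, ⟨hv1, hv2⟩, hv⟩ := to_std c2 h2
  have hc : ⇑(u.trans v.symm) = ⇑v.symm ∘ ⇑u := rfl
  have hvs : ∀ s : Set (Fin 8 → ℝ), ⇑v.symm '' (⇑v '' s) = s := by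
    intro s
    rw [← Set.image_comp]
    have : ⇑v.symm ∘ ⇑v = id := funext fun x => v.symm_apply_apply x
    rw [this, Set.image_id]
  refine ⟨u.trans v.symm, ⟨?_, ?_⟩, ?_⟩
  · intro a b
    rw [← hv1, ← hu1 a b]
    simp
  · rw [hc, Set.image_comp, hu2]
    conv_lhs => rw [← hv2]
    exact hvs _
  · have : (fun s => ⇑(u.trans v.symm) '' s) = (fun s => ⇑v.symm '' s) ∘ (fun s => ⇑u '' s) := by
      funext s
      rw [hc, Set.image_comp]; rfl
    rw [this, Set.image_comp, hu, ← hv, ← Set.image_comp]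
    have : (fun s => ⇑v.symm '' s) ∘ (fun s => ⇑v '' s) = id := funext hvs
    rw [this, Set.image_id]
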